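/- arXiv:1709.03447 — 6 statements merged into one kernel-verified Lean document; each statement's English description precedes it below -/
import Mathlib

section
/- Let E be a finite-dimensional real inner product space and let P be a linear subspace of E. Let h : ℝ → ℝ be C^∞ on ℝ and assume that all derivatives of odd order of h vanish at 0, i.e. iteratedDeriv (2*j+1) h 0 = 0 for every j ∈ ℕ. Then the radial function f : E → ℝ defined by f(x) = h(dist(x, P)) (the distance from x to the subspace P, equal to the norm of the orthogonal-complement component of x) is C^∞ on all of E. -/
/-!
If `h` is smooth with `h' 0 = 0`, then Hadamard's lemma gives `h' t = t • g t` with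
`g t = ∫₀¹ h'' (s t) ds` smooth. The function `f x = h ‖x‖` is then differentiable everywhere,
`0` included, with derivative `v ↦ ⟪x, v⟫ • g ‖x‖`. The odd derivatives of `g` at `0` are multiples
of those of `h`, so `g` satisfies the same hypotheses as `h`, and induction on the order of
differentiability shows that `f` is smooth. The distance to a subspace is `x ↦ ‖T x‖` with `T`
continuous and linear, namely an orthogonal projection in the completion.
-/

open MeasureTheory Set
open scoped ContDiff Topology

section ParametricIntegral

variable {𝕜 F : Type*} [RCLike 𝕜] [NormedAddCommGroup F] [NormedSpace ℝ F] [NormedSpace 𝕜 F]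
  {μ : Measure ℝ} [IsLocallyFiniteMeasure μ] {a b : ℝ}

theorem hasDerivAt_intervalIntegral_of_continuous {f f' : 𝕜 → ℝ → F} (hf : ∀ x, Continuous (f x))
    (hf' : Continuous (Function.uncurry f')) (hderiv : ∀ x s, HasDerivAt (f · s) (f' x s) x)
    (x₀ : 𝕜) :
    HasDerivAt (fun x => ∫ s in a..b, f x s ∂μ) (∫ s in a..b, f' x₀ s ∂μ) x₀ := by
  obtain ⟨C, hC⟩ := ((isCompact_closedBall x₀ 1).prod isCompact_uIcc).exists_bound_of_continuousOn
    (hf'.continuousOn (s := Metric.closedBall x₀ 1 ×ˢ uIcc a b))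
  refine (intervalIntegral.hasDerivAt_integral_of_dominated_loc_of_deriv_le (bound := fun _ => C)
    (Metric.ball_mem_nhds x₀ one_pos) (.of_forall fun x => (hf x).aestronglyMeasurable)
    ((hf x₀).intervalIntegrable a b) (hf'.uncurry_left x₀).aestronglyMeasurable
    (.of_forall fun s hs x hx => ?_) intervalIntegrable_const
    (.of_forall fun s _ x _ => hderiv x s)).2
  exact hC (x, s) ⟨Metric.ball_subset_closedBall hx, uIoc_subset_uIcc hs⟩

end ParametricIntegral

section DilationMoment

variable {F : Type*} [NormedAddCommGroup F] [NormedSpace ℝ F]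

/-- The `k`-th moment `∫₀¹ sᵏ u (s t) ds` of the dilates of `u`. The moment of order `0` of `u'` is
the smooth quotient `(u t - u 0) / t` of Hadamard's lemma, and the higher moments are the ones
that appear when it is differentiated. -/
noncomputable def dilationMoment (k : ℕ) (u : ℝ → F) (t : ℝ) : F :=
  ∫ s in (0 : ℝ)..1, s ^ k • u (s * t)

variable {u : ℝ → F}

theorem continuous_dilationMoment (hu : Continuous u) (k : ℕ) :
    Continuous (dilationMoment k u) :=
  intervalIntegral.continuous_parametric_intervalIntegral_of_continuous' (by fun_prop) 0 1

theorem hasDerivAt_dilationMoment (hu : ContDiff ℝ 1 u) (k : ℕ) (t : ℝ) :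
    HasDerivAt (dilationMoment k u) (dilationMoment (k + 1) (deriv u) t) t := by
  refine hasDerivAt_intervalIntegral_of_continuous
    (f' := fun t s => s ^ (k + 1) • deriv u (s * t)) (by fun_prop)
    (by fun_prop) (fun t s => ?_) t
  have hdilate : HasDerivAt (fun t => u (s * t)) (s • deriv u (s * t)) t :=
    (hu.differentiable one_ne_zero _).hasDerivAt.scomp t (hasDerivAt_const_mul s)
  simpa only [pow_succ, mul_smul] using hdilate.fun_const_smul (s ^ k)

theorem deriv_dilationMoment (hu : ContDiff ℝ 1 u) (k : ℕ) :
    deriv (dilationMoment k u) = dilationMoment (k + 1) (deriv u) :=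
  funext fun t => (hasDerivAt_dilationMoment hu k t).deriv

theorem contDiff_dilationMoment {n : ℕ∞} (hu : ContDiff ℝ n u) (k : ℕ) :
    ContDiff ℝ n (dilationMoment k u) := by
  refine contDiff_iff_forall_nat_le.2 fun m hm => ?_
  replace hu : ContDiff ℝ m u := hu.of_le (mod_cast hm)
  clear hm
  induction m generalizing u k with
  | zero => exact contDiff_zero.2 (continuous_dilationMoment hu.continuous k)
  | succ m ih =>
    have hu₁ : ContDiff ℝ 1 u := hu.of_le (by simp)
    refine (contDiff_succ_iff_deriv (n := m)).2
      ⟨fun t => (hasDerivAt_dilationMoment hu₁ k t).differentiableAt, by simp, ?_⟩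
    rw [deriv_dilationMoment hu₁]
    exact ih (k + 1) (contDiff_succ_iff_deriv.1 hu).2.2

theorem iteratedDeriv_dilationMoment {n : ℕ} (hu : ContDiff ℝ n u) (k : ℕ) :
    iteratedDeriv n (dilationMoment k u) = dilationMoment (k + n) (iteratedDeriv n u) := by
  induction n generalizing u k with
  | zero => simp only [iteratedDeriv_zero, add_zero]
  | succ n ih =>
    rw [iteratedDeriv_succ', deriv_dilationMoment (hu.of_le (by simp)),
      ih (contDiff_succ_iff_deriv.1 hu).2.2, iteratedDeriv_succ', add_right_comm, add_assoc]

theorem smul_dilationMoment_zero_deriv [CompleteSpace F] (hu : ContDiff ℝ 1 u) (t : ℝ) :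
    t • dilationMoment 0 (deriv u) t = u t - u 0 := by
  simp only [dilationMoment, pow_zero, one_smul]
  rw [intervalIntegral.smul_integral_comp_mul_right, zero_mul, one_mul,
    intervalIntegral.integral_deriv_eq_sub (fun x _ => hu.differentiable one_ne_zero x)
      ((hu.continuous_deriv le_rfl).intervalIntegrable 0 t)]

end DilationMoment

section CompNorm

variable {E F : Type*} [NormedAddCommGroup E] [NormedAddCommGroup F] [NormedSpace ℝ F] {h : ℝ → F}

theorem hasFDerivAt_comp_norm_zero [NormedSpace ℝ E] (hh : HasDerivAt h 0 0) :
    HasFDerivAt (fun y : E => h ‖y‖) (0 : E →L[ℝ] F) 0 := by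
  have hnorm : Filter.Tendsto (‖·‖) (𝓝 (0 : E)) (𝓝 0) := tendsto_norm_zero
  rw [hasFDerivAt_iff_isLittleO, ← Asymptotics.isLittleO_norm_right]
  simpa [Function.comp_def] using hh.isLittleO.comp_tendsto hnorm

variable [InnerProductSpace ℝ E]

theorem hasFDerivAt_norm_of_ne_zero {x : E} (hx : x ≠ 0) :
    HasFDerivAt (‖·‖) (‖x‖⁻¹ • innerSL ℝ x) x := by
  have hsqrt := (hasStrictFDerivAt_norm_sq x).hasFDerivAt.sqrt (by simpa using hx)
  simp only [Real.sqrt_sq (norm_nonneg _)] at hsqrt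
  convert! hsqrt using 1
  ext y
  simp only [smul_apply, coe_innerSL_apply, smul_eq_mul, one_div, mul_inv_rev, nsmul_eq_mul,
    Nat.cast_ofNat]
  field_simp

theorem hasFDerivAt_comp_norm {x : E} {c : F} (hh : HasDerivAt h (‖x‖ • c) ‖x‖) :
    HasFDerivAt (fun y : E => h ‖y‖) ((innerSL ℝ x).smulRight c) x := by
  rcases eq_or_ne x 0 with rfl | hx
  · simpa using hasFDerivAt_comp_norm_zero (E := E) (by simpa using hh)
  · convert! hh.hasFDerivAt.comp x (hasFDerivAt_norm_of_ne_zero hx) using 1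
    ext v
    simp only [ContinuousLinearMap.smulRight_apply, coe_innerSL_apply,
      ContinuousLinearMap.comp_apply, ContinuousLinearMap.toSpanSingleton_apply, smul_apply,
      smul_eq_mul, smul_smul]
    field_simp

theorem contDiff_comp_norm [CompleteSpace F] (hh : ContDiff ℝ ∞ h)
    (hodd : ∀ j : ℕ, iteratedDeriv (2 * j + 1) h 0 = 0) :
    ContDiff ℝ ∞ (fun x : E => h ‖x‖) := by
  refine contDiff_iff_forall_nat_le.2 fun n _ => ?_
  induction n generalizing h with
  | zero => exact contDiff_zero.2 (hh.continuous.comp continuous_norm)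
  | succ n ih =>
    obtain ⟨hdiff, hh₁⟩ := contDiff_infty_iff_deriv.1 hh
    obtain ⟨-, hh₂⟩ := contDiff_infty_iff_deriv.1 hh₁
    set g : ℝ → F := dilationMoment 0 (deriv (deriv h)) with hg
    have hg_smul (t : ℝ) : t • g t = deriv h t := by
      have h₀ : deriv h 0 = 0 := by simpa using hodd 0
      rw [smul_dilationMoment_zero_deriv (hh₁.of_le (by simp)), h₀, sub_zero]
    have hg_odd (j : ℕ) : iteratedDeriv (2 * j + 1) g 0 = 0 := by
      have hj : iteratedDeriv (2 * j + 1) (deriv (deriv h)) 0 = 0 := by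
        simpa only [mul_add, mul_one, iteratedDeriv_succ'] using hodd (j + 1)
      rw [hg, iteratedDeriv_dilationMoment (contDiff_infty.1 hh₂ _)]
      simp [dilationMoment, hj]
    have hg_norm : ContDiff ℝ n (fun x : E => g ‖x‖) :=
      ih (contDiff_dilationMoment hh₂ 0) hg_odd (by simp)
    refine contDiff_succ_iff_hasFDerivAt.2
      ⟨fun x => (innerSL ℝ x).smulRight (g ‖x‖), (innerSL ℝ).contDiff.smulRight hg_norm,
        fun x => hasFDerivAt_comp_norm ?_⟩
    rw [hg_smul]
    exact (hdiff ‖x‖).hasDerivAt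

end CompNorm

section InfDist

open UniformSpace

variable {𝕜 E : Type*} [RCLike 𝕜] [NormedAddCommGroup E] [InnerProductSpace 𝕜 E]

theorem infDist_eq_norm_starProjection_orthogonal (P : Submodule 𝕜 E) [P.HasOrthogonalProjection]
    (x : E) : Metric.infDist x (P : Set E) = ‖Pᗮ.starProjection x‖ := by
  rw [Metric.infDist_eq_iInf, Submodule.starProjection_orthogonal_val,
    Submodule.starProjection_minimal]
  simp only [dist_eq_norm, SetLike.coe_sort_coe]

theorem exists_continuousLinearMap_infDist_eq_norm (P : Submodule 𝕜 E) :
    ∃ T : E →L[𝕜] Completion E, ∀ x, Metric.infDist x (P : Set E) = ‖T x‖ := by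
  let ι : E →ₗᵢ[𝕜] Completion E := Completion.toComplₗᵢ
  let Q : Submodule 𝕜 (Completion E) := (P.map ι.toLinearMap).topologicalClosure
  refine ⟨Qᗮ.starProjection ∘L ι.toContinuousLinearMap, fun x => ?_⟩
  calc Metric.infDist x (P : Set E) = Metric.infDist (ι x) (ι '' P) :=
        (Metric.infDist_image ι.isometry).symm
    _ = Metric.infDist (ι x) Q := Metric.infDist_closure.symm
    _ = ‖Qᗮ.starProjection (ι x)‖ := infDist_eq_norm_starProjection_orthogonal Q (ι x)

end InfDist

theorem radial_function_smooth_general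
    {E F : Type*} [NormedAddCommGroup E] [InnerProductSpace ℝ E]
    [NormedAddCommGroup F] [NormedSpace ℝ F] [CompleteSpace F]
    (P : Submodule ℝ E) {h : ℝ → F} (hh : ContDiff ℝ ∞ h)
    (hodd : ∀ j : ℕ, iteratedDeriv (2 * j + 1) h 0 = 0) :
    ContDiff ℝ ∞ (fun x : E => h (Metric.infDist x (P : Set E))) := by
  obtain ⟨T, hT⟩ := exists_continuousLinearMap_infDist_eq_norm P
  simp only [hT]
  exact (contDiff_comp_norm hh hodd).comp T.contDiff

/-- **Smoothness of radial functions (Euclidean case).**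
Let `E` be a finite-dimensional real inner product space and `P` a linear subspace of `E`.
If `h : ℝ → ℝ` is `C^∞` and all its odd-order derivatives vanish at `0`, then the radial
function `x ↦ h (dist(x, P))` is `C^∞` on all of `E`. -/
theorem radial_function_smooth
    {E : Type*} [NormedAddCommGroup E] [InnerProductSpace ℝ E] [FiniteDimensional ℝ E]
    (P : Submodule ℝ E) (h : ℝ → ℝ)
    (hh : ContDiff ℝ (⊤ : ℕ∞) h)
    (hodd : ∀ j : ℕ, iteratedDeriv (2 * j + 1) h 0 = 0) :
    ContDiff ℝ (⊤ : ℕ∞) (fun x : E => h (Metric.infDist x (P : Set E))) :=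
  radial_function_smooth_general P hh hodd
end

section
/- Let h : ℝ → ℝ be C^∞ with iteratedDeriv (2*j+1) h 0 = 0 for every j ∈ ℕ. Define F : ℝ → ℝ by F(r) = (deriv h r)/r for r ≠ 0 and F(0) = iteratedDeriv 2 h 0. Then F is C^∞ on ℝ and, moreover, all derivatives of odd order of F vanish at 0, i.e. iteratedDeriv (2*j+1) F 0 = 0 for every j ∈ ℕ. -/
/-!
For a `C^{n+1}` function `f`, Hadamard's formula
`dslope f a x = ∫₀¹ f' (a + t (x - a)) dt` removes the singularity of the difference quotient at
`a`. Each differentiation in `x` of such an average differentiates the integrand and multiplies it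
by `t`, so `dslope f a` is `C^n`, and since `∫₀¹ tⁿ dt = 1 / (n + 1)` its `n`-th derivative at `a`
is `f⁽ⁿ⁺¹⁾(a) / (n + 1)`. When `h'(0) = 0`, the function `h'(r) / r` is `dslope h' 0`, whose
`n`-th derivative at `0` is therefore `h⁽ⁿ⁺²⁾(0) / (n + 1)`; the parity of the order is preserved.
-/

section SegmentMoment

open Set Metric

variable {𝕜 E : Type*} [RCLike 𝕜] [NormedAddCommGroup E] [NormedSpace ℝ E]

/-- The `k`-th moment `∫₀¹ tᵏ φ(a + t (x - a)) dt` of `φ` along the segment from `a` to `x`.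
The segment is parametrized by `[0, 1]`, so that the domain of integration does not depend
on `x`. The powers of `t` record how often the average of `φ` has been differentiated in `x`. -/
noncomputable def segmentMoment (k : ℕ) (φ : 𝕜 → E) (a x : 𝕜) : E :=
  ∫ t in (0 : ℝ)..1, t ^ k • φ (a + t • (x - a))

theorem segmentMoment_self [CompleteSpace E] (k : ℕ) (φ : 𝕜 → E) (a : 𝕜) :
    segmentMoment k φ a a = (k + 1 : ℝ)⁻¹ • φ a := by
  simp [segmentMoment, intervalIntegral.integral_smul_const]

theorem continuous_segmentMoment {φ : 𝕜 → E} (hφ : Continuous φ) (k : ℕ) (a : 𝕜) :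
    Continuous (segmentMoment k φ a) := by
  unfold segmentMoment
  fun_prop

variable [NormedSpace 𝕜 E] [IsScalarTower ℝ 𝕜 E]

theorem hasDerivAt_segmentMoment {φ : 𝕜 → E} (hφ : ContDiff 𝕜 1 φ) (k : ℕ) (a x : 𝕜) :
    HasDerivAt (segmentMoment k φ a) (segmentMoment (k + 1) (deriv φ) a x) x := by
  have hφ_cont : Continuous φ := hφ.continuous
  have h_integrand (t : ℝ) (y : 𝕜) : HasDerivAt (fun y ↦ t ^ k • φ (a + t • (y - a)))
      (t ^ (k + 1) • deriv φ (a + t • (y - a))) y := by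
    have h_segment : HasDerivAt (fun y : 𝕜 ↦ a + t • (y - a)) (t • (1 : 𝕜)) y :=
      (((hasDerivAt_id y).sub_const a).const_smul t).const_add a
    have hφ_deriv := (hφ.differentiable one_ne_zero (a + t • (y - a))).hasDerivAt
    refine ((hφ_deriv.scomp y h_segment).const_smul (t ^ k)).congr_deriv ?_
    rw [smul_assoc, one_smul, smul_smul, pow_succ]
  obtain ⟨C, hC⟩ := ((isCompact_closedBall x 1).prod isCompact_Icc).exists_bound_of_continuousOn
    (s := closedBall x 1 ×ˢ Icc (0 : ℝ) 1)
    (f := fun p : 𝕜 × ℝ ↦ p.2 ^ (k + 1) • deriv φ (a + p.2 • (p.1 - a)))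
    (Continuous.continuousOn (by fun_prop))
  refine (intervalIntegral.hasDerivAt_integral_of_dominated_loc_of_deriv_le
    (F := fun y t ↦ t ^ k • φ (a + t • (y - a)))
    (F' := fun y t ↦ t ^ (k + 1) • deriv φ (a + t • (y - a)))
    (bound := fun _ ↦ C) (closedBall_mem_nhds x one_pos)
    (.of_forall fun _ ↦ Continuous.aestronglyMeasurable (by fun_prop))
    (Continuous.intervalIntegrable (by fun_prop) _ _)
    (Continuous.aestronglyMeasurable (by fun_prop))
    (.of_forall fun t ht y hy ↦ ?_) intervalIntegrable_const
    (.of_forall fun t _ y _ ↦ h_integrand t y)).2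
  rw [uIoc_of_le zero_le_one] at ht
  exact hC (y, t) ⟨hy, Ioc_subset_Icc_self ht⟩

theorem deriv_segmentMoment {φ : 𝕜 → E} (hφ : ContDiff 𝕜 1 φ) (k : ℕ) (a : 𝕜) :
    deriv (segmentMoment k φ a) = segmentMoment (k + 1) (deriv φ) a :=
  deriv_eq (hasDerivAt_segmentMoment hφ k a)

theorem iteratedDeriv_segmentMoment {n : ℕ} {φ : 𝕜 → E} (hφ : ContDiff 𝕜 n φ) (k : ℕ) (a : 𝕜) :
    iteratedDeriv n (segmentMoment k φ a) = segmentMoment (k + n) (iteratedDeriv n φ) a := by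
  induction n generalizing k φ with
  | zero => simp only [iteratedDeriv_zero, add_zero]
  | succ n ih =>
    rw [iteratedDeriv_succ', deriv_segmentMoment (hφ.of_le (by simp)), ih hφ.deriv',
      iteratedDeriv_succ', add_right_comm, add_assoc]

theorem contDiff_segmentMoment {n : ℕ∞} {φ : 𝕜 → E} (hφ : ContDiff 𝕜 n φ) (k : ℕ) (a : 𝕜) :
    ContDiff 𝕜 n (segmentMoment k φ a) := by
  refine contDiff_iff_forall_nat_le.2 fun m hm ↦ ?_
  replace hφ : ContDiff 𝕜 m φ := hφ.of_le (by exact_mod_cast hm)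
  clear hm
  induction m generalizing k φ with
  | zero => exact contDiff_zero.2 (continuous_segmentMoment hφ.continuous k a)
  | succ m ih =>
    have hφ_one : ContDiff 𝕜 1 φ := hφ.of_le (by simp)
    refine (contDiff_succ_iff_deriv (n := m)).2
      ⟨fun x ↦ (hasDerivAt_segmentMoment hφ_one k a x).differentiableAt, by simp, ?_⟩
    rw [deriv_segmentMoment hφ_one]
    exact ih (k + 1) hφ.deriv'

end SegmentMoment

section DSlope

variable {𝕜 E : Type*} [RCLike 𝕜] [NormedAddCommGroup E] [NormedSpace 𝕜 E] [CompleteSpace E]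

theorem dslope_eq_segmentMoment_deriv [NormedSpace ℝ E] [IsScalarTower ℝ 𝕜 E] {f : 𝕜 → E}
    (hf : ContDiff 𝕜 1 f) (a : 𝕜) : dslope f a = segmentMoment 0 (deriv f) a := by
  funext x
  rcases eq_or_ne x a with rfl | hx
  · simp [segmentMoment_self]
  · have h_ftc : (x - a) • segmentMoment 0 (deriv f) a x = f x - f a := by
      simpa [segmentMoment] using intervalIntegral.integral_unitInterval_deriv_eq_sub
        (z₀ := a) (z₁ := x - a) (Continuous.continuousOn (by fun_prop))
        (fun t _ ↦ (hf.differentiable one_ne_zero (a + t • (x - a))).hasDerivAt)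
    rw [dslope_of_ne f hx, slope_def_module, ← h_ftc, inv_smul_smul₀ (sub_ne_zero.2 hx)]

theorem contDiff_dslope {n : ℕ∞} {f : 𝕜 → E} (hf : ContDiff 𝕜 (n + 1) f) (a : 𝕜) :
    ContDiff 𝕜 n (dslope f a) := by
  let _ : NormedSpace ℝ E := .restrictScalars ℝ 𝕜 E
  have : IsScalarTower ℝ 𝕜 E := RestrictScalars.isScalarTower ℝ 𝕜 E
  rw [dslope_eq_segmentMoment_deriv (hf.of_le (by simp))]
  exact contDiff_segmentMoment hf.deriv' 0 a

theorem iteratedDeriv_dslope_self {n : ℕ} {f : 𝕜 → E} (hf : ContDiff 𝕜 (n + 1) f) (a : 𝕜) :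
    iteratedDeriv n (dslope f a) a = (n + 1 : 𝕜)⁻¹ • iteratedDeriv (n + 1) f a := by
  let _ : NormedSpace ℝ E := .restrictScalars ℝ 𝕜 E
  have : IsScalarTower ℝ 𝕜 E := RestrictScalars.isScalarTower ℝ 𝕜 E
  rw [dslope_eq_segmentMoment_deriv (hf.of_le (by simp)), iteratedDeriv_segmentMoment hf.deriv',
    segmentMoment_self, zero_add, iteratedDeriv_succ', ← algebraMap_smul 𝕜 (n + 1 : ℝ)⁻¹]
  simp

theorem deriv_div_self_smooth_even_general {n : ℕ∞} {h F : 𝕜 → E} (hh : ContDiff 𝕜 (n + 2) h)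
    (hodd : ∀ j : ℕ, ((2 * j + 1 : ℕ) : ℕ∞) ≤ n + 2 → iteratedDeriv (2 * j + 1) h 0 = 0)
    (hF : ∀ r : 𝕜, r ≠ 0 → F r = r⁻¹ • deriv h r) (hF0 : F 0 = iteratedDeriv 2 h 0) :
    ContDiff 𝕜 n F ∧
      ∀ j : ℕ, ((2 * j + 1 : ℕ) : ℕ∞) ≤ n → iteratedDeriv (2 * j + 1) F 0 = 0 := by
  have hh' : ContDiff 𝕜 (n + 1) (deriv h) := by
    rw [← one_add_one_eq_two, ← add_assoc] at hh
    exact hh.deriv'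
  have hh'_zero : deriv h 0 = 0 := by
    simpa using hodd 0 (by simpa using le_add_left one_le_two)
  have hF_eq : F = dslope (deriv h) 0 := by
    funext r
    rcases eq_or_ne r 0 with rfl | hr
    · simp [hF0, iteratedDeriv_succ']
    · simp [hF r hr, dslope_of_ne _ hr, slope_def_module, hh'_zero]
  subst hF_eq
  refine ⟨contDiff_dslope hh' 0, fun j hj ↦ ?_⟩
  have h_next : iteratedDeriv (2 * j + 1 + 1 + 1) h 0 = 0 :=
    hodd (j + 1) (by exact_mod_cast add_le_add_left hj 2)
  have hh'_order : ContDiff 𝕜 ((2 * j + 1 : ℕ) + 1) (deriv h) :=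
    hh'.of_le (by gcongr; exact WithTop.coe_le_coe.2 hj)
  rw [iteratedDeriv_dslope_self hh'_order, ← iteratedDeriv_succ', h_next, smul_zero]

end DSlope

/-- **Auxiliary one-variable fact.** If `h : ℝ → ℝ` is `C^∞` with all odd-order derivatives
vanishing at `0`, and `F r = (deriv h r) / r` for `r ≠ 0`, `F 0 = h''(0)`, then `F` is `C^∞`
and all its odd-order derivatives vanish at `0` as well. -/
theorem deriv_div_self_smooth_even
    (h : ℝ → ℝ) (hh : ContDiff ℝ (⊤ : ℕ∞) h)
    (hodd : ∀ j : ℕ, iteratedDeriv (2 * j + 1) h 0 = 0)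
    (F : ℝ → ℝ)
    (hF : ∀ r : ℝ, r ≠ 0 → F r = deriv h r / r)
    (hF0 : F 0 = iteratedDeriv 2 h 0) :
    ContDiff ℝ (⊤ : ℕ∞) F ∧ ∀ j : ℕ, iteratedDeriv (2 * j + 1) F 0 = 0 :=
  (deriv_div_self_smooth_even_general (n := ⊤) hh (fun j _ ↦ hodd j)
    (fun r hr ↦ by rw [hF r hr, smul_eq_mul, div_eq_inv_mul]) hF0).imp_right
    fun hF_odd j ↦ hF_odd j le_top
end

section
/- Let n ≥ 1, let E = EuclideanSpace ℝ (Fin n), and let σ denote the canonical surface measure on the unit sphere S = {ω ∈ E : ‖ω‖ = 1}. Let f : E → ℝ be C^∞. Then the radialization Af : E → ℝ defined by (Af)(x) = ⨍_S f(‖x‖ • ω) dσ(ω) is C^∞ on all of E (including at x = 0). -/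
open MeasureTheory

/-! The orthogonal group `O(E)` preserves the surface measure of the unit sphere and acts
transitively on every sphere centred at the origin. By Fubini's theorem the mean of `f` over the
sphere of radius `‖x‖` is therefore `∫ f (U x) dν(U)` for any invariant probability measure `ν` on
`O(E)`. The norm no longer occurs in this formula, and since `O(E)` is compact one may differentiate
under the integral sign at every `x`, the origin included. -/

open Metric

section ParametricIntegral

variable {P M K F : Type*} [NormedAddCommGroup P] [NormedSpace ℝ P]
  [NormedAddCommGroup M] [NormedSpace ℝ M] [NormedAddCommGroup F] [NormedSpace ℝ F]
  [TopologicalSpace K] [CompactSpace K] [SecondCountableTopology K]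
  [MeasurableSpace K] [OpensMeasurableSpace K] {ι : K → M} {H : P × M → F}

theorem hasFDerivAt_integral_of_compactSpace [ProperSpace P] (μ : Measure K) [IsFiniteMeasure μ]
    (hι : Continuous ι) (hH : ContDiff ℝ 1 H) (x : P) :
    HasFDerivAt (fun x ↦ ∫ k, H (x, ι k) ∂μ)
      (∫ k, fderiv ℝ H (x, ι k) ∘L .inl ℝ P M ∂μ) x := by
  have hH' : Continuous fun p ↦ fderiv ℝ H p ∘L .inl ℝ P M :=
    (hH.continuous_fderiv one_ne_zero).clm_comp continuous_const
  have hslice (x : P) : Continuous fun k ↦ (x, ι k) := by fun_prop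
  obtain ⟨C, hC⟩ := ((isCompact_closedBall x 1).prod
    (isCompact_range hι)).exists_bound_of_continuousOn hH'.continuousOn
  refine hasFDerivAt_integral_of_dominated_of_fderiv_le (bound := fun _ ↦ C)
    (F' := fun x k ↦ fderiv ℝ H (x, ι k) ∘L .inl ℝ P M) (closedBall_mem_nhds x one_pos)
    (.of_forall fun y ↦ (hH.continuous.comp (hslice y)).aestronglyMeasurable)
    ((hH.continuous.comp (hslice x)).integrable_of_hasCompactSupport (.of_compactSpace _))
    (hH'.comp (hslice x)).aestronglyMeasurable
    (.of_forall fun k y hy ↦ hC (y, ι k) ⟨hy, k, rfl⟩) (integrable_const C)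
    (.of_forall fun k y _ ↦ ?_)
  exact (hH.differentiable one_ne_zero _).hasFDerivAt.comp y (hasFDerivAt_prodMk_left y (ι k))

theorem fderiv_integral_of_compactSpace_apply [ProperSpace P] (μ : Measure K) [IsFiniteMeasure μ]
    (hι : Continuous ι) (hH : ContDiff ℝ 1 H) (x y : P) :
    fderiv ℝ (fun x ↦ ∫ k, H (x, ι k) ∂μ) x y = ∫ k, fderiv ℝ H (x, ι k) (y, 0) ∂μ := by
  have hint : Integrable (fun k ↦ fderiv ℝ H (x, ι k) ∘L .inl ℝ P M) μ :=
    have := hH.continuous_fderiv one_ne_zero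
    Continuous.integrable_of_hasCompactSupport (by fun_prop) (.of_compactSpace _)
  rw [(hasFDerivAt_integral_of_compactSpace μ hι hH x).fderiv,
    ContinuousLinearMap.integral_apply hint]
  simp

theorem contDiff_integral_of_compactSpace [FiniteDimensional ℝ P] (μ : Measure K)
    [IsFiniteMeasure μ] (hι : Continuous ι) {m : ℕ∞} (hH : ContDiff ℝ m H) :
    ContDiff ℝ m fun x ↦ ∫ k, H (x, ι k) ∂μ := by
  have : ProperSpace P := FiniteDimensional.proper_real P
  refine contDiff_iff_forall_nat_le.2 fun j hj ↦ ?_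
  replace hH : ContDiff ℝ j H := hH.of_le (mod_cast hj)
  clear hj
  induction j generalizing H with
  | zero =>
    have hcont : Continuous (Function.uncurry fun x k ↦ H (x, ι k)) :=
      hH.continuous.comp (continuous_fst.prodMk (hι.comp continuous_snd))
    simpa using! continuous_parametric_integral_of_continuous hcont isCompact_univ (μ := μ)
  | succ j ih =>
    push_cast at hH ⊢
    have hH₁ : ContDiff ℝ 1 H := hH.of_le le_add_self
    refine contDiff_succ_iff_fderiv_apply.2
      ⟨fun x ↦ (hasFDerivAt_integral_of_compactSpace μ hι hH₁ x).differentiableAt, by simp,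
        fun y ↦ ?_⟩
    simpa only [fderiv_integral_of_compactSpace_apply μ hι hH₁] using
      ih ((hH.fderiv_right le_rfl).clm_apply contDiff_const)

end ParametricIntegral

section UnitSphere

open scoped Pointwise

variable {E E' : Type*} [NormedAddCommGroup E] [NormedSpace ℝ E]
  [NormedAddCommGroup E'] [NormedSpace ℝ E']

/-- The homeomorphism between unit spheres induced by a linear isometry equivalence. -/
def unitSphereHomeomorph (U : E ≃ₗᵢ[ℝ] E') : sphere (0 : E) 1 ≃ₜ sphere (0 : E') 1 :=
  U.toHomeomorph.subtype fun x ↦ by simp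

@[simp]
theorem coe_unitSphereHomeomorph (U : E ≃ₗᵢ[ℝ] E') (ω : sphere (0 : E) 1) :
    (unitSphereHomeomorph U ω : E') = U ω :=
  rfl

theorem preimage_smul_coe_image_sphere (U : E ≃ₗᵢ[ℝ] E') (I : Set ℝ)
    (s : Set (sphere (0 : E') 1)) :
    U ⁻¹' (I • ((↑) '' s : Set E')) = I • ((↑) '' (unitSphereHomeomorph U ⁻¹' s) : Set E) := by
  ext x
  constructor
  · rintro ⟨r, hr, _, ⟨ω, hω, rfl⟩, hx⟩
    refine ⟨r, hr, _, ⟨(unitSphereHomeomorph U).symm ω, by simpa, rfl⟩, U.injective ?_⟩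
    rw [map_smul, ← coe_unitSphereHomeomorph, Homeomorph.apply_symm_apply]
    exact hx
  · rintro ⟨r, hr, _, ⟨ω, hω, rfl⟩, rfl⟩
    exact ⟨r, hr, _, ⟨unitSphereHomeomorph U ω, hω, rfl⟩, by simp⟩

variable [MeasurableSpace E] [BorelSpace E] [MeasurableSpace E'] [BorelSpace E']

theorem measurePreserving_unitSphereHomeomorph {U : E ≃ₗᵢ[ℝ] E'} {μ : Measure E} {ν : Measure E'}
    (hU : MeasurePreserving U μ ν) :
    MeasurePreserving (unitSphereHomeomorph U) μ.toSphere ν.toSphere := by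
  have hmeas := (unitSphereHomeomorph U).measurable
  refine ⟨hmeas, Measure.ext fun s hs ↦ ?_⟩
  rw [Measure.map_apply hmeas hs, μ.toSphere_apply' (hmeas hs), ν.toSphere_apply' hs,
    ← preimage_smul_coe_image_sphere,
    hU.measure_preimage_emb U.toHomeomorph.measurableEmbedding, U.toLinearEquiv.finrank_eq]

end UnitSphere

section OrthogonalGroup

instance compactSpace_unitary (𝕜 E : Type*) [RCLike 𝕜] [NormedAddCommGroup E]
    [InnerProductSpace 𝕜 E] [CompleteSpace E] [FiniteDimensional 𝕜 E] :
    CompactSpace (unitary (E →L[𝕜] E)) := by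
  have : ProperSpace (E →L[𝕜] E) := FiniteDimensional.proper_rclike 𝕜 _
  refine isCompact_iff_compactSpace.1 (isCompact_of_isClosed_isBounded isClosed_unitary ?_)
  exact isBounded_iff_forall_norm_le.2 ⟨1, fun U hU ↦
    U.opNorm_le_bound zero_le_one fun x ↦ by simp [U.norm_map_of_mem_unitary hU]⟩

variable {E : Type*} [NormedAddCommGroup E] [InnerProductSpace ℝ E] [CompleteSpace E]

theorem exists_unitary_apply_eq {v w : E} (h : ‖v‖ = ‖w‖) :
    ∃ V : unitary (E →L[ℝ] E), (V : E →L[ℝ] E) v = w :=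
  ⟨Unitary.linearIsometryEquiv.symm (ℝ ∙ (v - w))ᗮ.reflection, Submodule.reflection_sub h⟩

variable {F : Type*} [NormedAddCommGroup F] [NormedSpace ℝ F]
  [MeasurableSpace (unitary (E →L[ℝ] E))] [BorelSpace (unitary (E →L[ℝ] E))]

theorem integral_unitary_apply_eq_of_norm_eq (ν : Measure (unitary (E →L[ℝ] E)))
    [ν.IsMulRightInvariant] (f : E → F) {v w : E} (h : ‖v‖ = ‖w‖) :
    ∫ U, f ((U : E →L[ℝ] E) v) ∂ν = ∫ U, f ((U : E →L[ℝ] E) w) ∂ν := by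
  obtain ⟨V, rfl⟩ := exists_unitary_apply_eq h
  exact (integral_mul_right_eq_self (fun U : unitary (E →L[ℝ] E) ↦ f ((U : E →L[ℝ] E) v)) V).symm

end OrthogonalGroup

theorem exists_isProbabilityMeasure_isMulRightInvariant (G : Type*) [Group G] [TopologicalSpace G]
    [IsTopologicalGroup G] [CompactSpace G] [MeasurableSpace G] [BorelSpace G] :
    ∃ ν : Measure G, IsProbabilityMeasure ν ∧ ν.IsMulRightInvariant := by
  let μ : Measure G := Measure.haarMeasure ⊤
  have : IsProbabilityMeasure μ := ⟨Measure.haarMeasure_self (K₀ := ⊤)⟩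
  exact ⟨μ.inv, Measure.isProbabilityMeasure_map measurable_inv.aemeasurable, inferInstance⟩

section Radialization

variable {E F : Type*} [NormedAddCommGroup E] [InnerProductSpace ℝ E] [FiniteDimensional ℝ E]
  [MeasurableSpace E] [BorelSpace E] [NormedAddCommGroup F] [NormedSpace ℝ F]

/-- The radialization of `f`: its value at `x` is the mean of `f` over the sphere of radius `‖x‖`
centred at the origin, parametrized by the unit sphere. It is `0` when `E` is the zero space, whose
unit sphere is empty. -/
noncomputable def radialization (f : E → F) (x : E) : F :=
  ⨍ ω : sphere (0 : E) 1, f (‖x‖ • (ω : E)) ∂(volume : Measure E).toSphere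

theorem radialization_comp_linearIsometryEquiv (f : E → F) (U : E ≃ₗᵢ[ℝ] E) :
    radialization (f ∘ U) = radialization f := by
  ext x
  have hpres := measurePreserving_unitSphereHomeomorph U.measurePreserving
  have hcomp (ω : sphere (0 : E) 1) :
      (f ∘ U) (‖x‖ • (ω : E)) = f (‖x‖ • (unitSphereHomeomorph U ω : E)) := by simp
  simp only [radialization, hcomp]
  exact (hpres.smul_measure _).integral_comp (unitSphereHomeomorph U).measurableEmbedding
    fun ω ↦ f (‖x‖ • (ω : E))

variable [MeasurableSpace (unitary (E →L[ℝ] E))] [BorelSpace (unitary (E →L[ℝ] E))]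

theorem radialization_eq_integral_unitary [Nontrivial E] [CompleteSpace F]
    (ν : Measure (unitary (E →L[ℝ] E))) [IsProbabilityMeasure ν] [ν.IsMulRightInvariant]
    {f : E → F} (hf : Continuous f) (x : E) :
    radialization f x = ∫ U, f ((U : E →L[ℝ] E) x) ∂ν := by
  have hnorm (ω : sphere (0 : E) 1) : ‖‖x‖ • (ω : E)‖ = ‖x‖ := by simp [norm_smul]
  have : NeZero (volume : Measure E).toSphere := ⟨volume.toSphere_ne_zero⟩
  calc
    radialization f x = ∫ U, radialization (f ∘ (U : E →L[ℝ] E)) x ∂ν := by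
      have hU (U : unitary (E →L[ℝ] E)) :
          radialization (f ∘ (U : E →L[ℝ] E)) x = radialization f x :=
        congrFun (radialization_comp_linearIsometryEquiv f (Unitary.linearIsometryEquiv U)) x
      simp [hU]
    _ = ⨍ ω : sphere (0 : E) 1, ∫ U, f ((U : E →L[ℝ] E) (‖x‖ • (ω : E))) ∂ν ∂volume.toSphere :=
      integral_integral_swap_of_hasCompactSupport
        (by simp only [Function.uncurry_def, Function.comp_apply]; fun_prop) (.of_compactSpace _)
    _ = ⨍ _ : sphere (0 : E) 1, ∫ U, f ((U : E →L[ℝ] E) x) ∂ν ∂volume.toSphere := by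
      simp_rw [fun ω ↦ integral_unitary_apply_eq_of_norm_eq ν f (hnorm ω)]
    _ = ∫ U, f ((U : E →L[ℝ] E) x) ∂ν := average_const _ _

end Radialization

theorem radialization_smooth_general {E F : Type*} [NormedAddCommGroup E] [InnerProductSpace ℝ E]
    [FiniteDimensional ℝ E] [Nontrivial E] [MeasurableSpace E] [BorelSpace E]
    [NormedAddCommGroup F] [NormedSpace ℝ F] [CompleteSpace F] {m : ℕ∞} {f : E → F}
    (hf : ContDiff ℝ m f) : ContDiff ℝ m (radialization f) := by
  let _ : MeasurableSpace (unitary (E →L[ℝ] E)) := borel _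
  have : BorelSpace (unitary (E →L[ℝ] E)) := ⟨rfl⟩
  obtain ⟨ν, _, _⟩ := exists_isProbabilityMeasure_isMulRightInvariant (unitary (E →L[ℝ] E))
  rw [funext fun x ↦ radialization_eq_integral_unitary ν hf.continuous x]
  exact contDiff_integral_of_compactSpace ν continuous_subtype_val
    (H := fun p : E × (E →L[ℝ] E) ↦ f (p.2 p.1))
    (hf.comp (contDiff_snd.clm_apply contDiff_fst))

/-- **Smoothness of the radialization (Euclidean ball case).** For `f : EuclideanSpace ℝ (Fin n) → ℝ`
`C^∞`, the radialization `(Af)(x) = ⨍_S f (‖x‖ • ω) dσ(ω)` (average over the unit sphere with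
respect to the canonical surface measure) is `C^∞` on all of `E`, including at `x = 0`. -/
theorem radialization_smooth
    (n : ℕ) (hn : 1 ≤ n)
    (f : EuclideanSpace ℝ (Fin n) → ℝ) (hf : ContDiff ℝ (⊤ : ℕ∞) f) :
    ContDiff ℝ (⊤ : ℕ∞) (fun x : EuclideanSpace ℝ (Fin n) =>
      ⨍ ω : Metric.sphere (0 : EuclideanSpace ℝ (Fin n)) 1,
        f (‖x‖ • (ω : EuclideanSpace ℝ (Fin n)))
        ∂((volume : Measure (EuclideanSpace ℝ (Fin n))).toSphere)) := by
  have : Nonempty (Fin n) := ⟨⟨0, hn⟩⟩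
  exact radialization_smooth_general hf
end

section
/- Let R > 0 and d ∈ ℕ. Let θ : ℝ → ℝ be C^∞, with θ(r) > 0 for all r ∈ [0,R), and suppose θ vanishes to exact order d at R: iteratedDeriv j θ R = 0 for all j < d, and iteratedDeriv d θ R ≠ 0. Define q : ℝ → ℝ by q(r) = (∫_{s=r}^{R} θ(s) ds) / θ(r). Then the derivative of q tends to −1/(d+1) as r → R from the left: Tendsto (deriv q) (𝓝[<] R) (𝓝 (−1/(d+1))). -/
/-!
A function `f` with a zero of exact order `n` at `a` satisfies `(x - a) f'(x) / f(x) → n` as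
`x → a`. Apply this to `θ` and to its primitive `G(r) = ∫_R^r θ`, whose zero at `R` has order
`d + 1`. Since `q = -G / G'`, we have `-q' = 1 - (θ' / θ) / (G' / G)`, which tends to
`1 - d / (d + 1) = 1 / (d + 1)`.
-/

open Filter Set
open scoped Topology

section

variable {𝕜 F : Type*} [NontriviallyNormedField 𝕜] [NormedAddCommGroup F] [NormedSpace 𝕜 F]

theorem contDiffAt_nat_succ_iff_deriv {f : 𝕜 → F} {x : 𝕜} {n : ℕ} :
    ContDiffAt 𝕜 (n + 1) f x ↔
      (∀ᶠ y in 𝓝 x, DifferentiableAt 𝕜 f y) ∧ ContDiffAt 𝕜 n (deriv f) x := by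
  constructor
  · intro hf
    refine ⟨?_, (hf.fderiv_right le_rfl).clm_apply contDiffAt_const⟩
    filter_upwards [hf.eventually (by simp)] with y hy
    exact hy.differentiableAt (by simp)
  · rintro ⟨hdiff, hderiv⟩
    refine contDiffAt_succ_iff_hasFDerivAt.mpr
      ⟨fun y => ContinuousLinearMap.toSpanSingleton 𝕜 (deriv f y), ⟨_, hdiff, fun y hy => ?_⟩, ?_⟩
    · exact DifferentiableAt.hasDerivAt hy
    · exact (ContinuousLinearMap.toSpanSingletonCLE (𝕜 := 𝕜) (E := F)).contDiff.contDiffAt.comp x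
        hderiv

theorem deriv_div_deriv_eq_one_sub_logDeriv_div {𝕜' : Type*} [NontriviallyNormedField 𝕜']
    [NormedAlgebra 𝕜 𝕜'] {f : 𝕜 → 𝕜'} {x : 𝕜} (hf : DifferentiableAt 𝕜 f x)
    (hf' : DifferentiableAt 𝕜 (deriv f) x) (hx' : deriv f x ≠ 0) :
    deriv (f / deriv f) x = 1 - logDeriv (deriv f) x / logDeriv f x := by
  rw [deriv_div hf hf' hx', logDeriv_apply, logDeriv_apply]
  field_simp

end

theorem tendsto_inv_pow_smul_of_iteratedDeriv_eq_zero {E : Type*} [NormedAddCommGroup E]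
    [NormedSpace ℝ E] {f : ℝ → E} {a : ℝ} {n : ℕ} (hf : ContDiffAt ℝ n f a)
    (hzero : ∀ j < n, iteratedDeriv j f a = 0) :
    Tendsto (fun x => ((x - a) ^ n)⁻¹ • f x) (𝓝[≠] a)
      (𝓝 ((n.factorial : ℝ)⁻¹ • iteratedDeriv n f a)) := by
  obtain ⟨ε, hε, hball⟩ := Metric.eventually_nhds_iff_ball.mp (hf.eventually (by simp))
  have ha : a ∈ Metric.ball a ε := Metric.mem_ball_self hε
  have taylor_eq (x : ℝ) : taylorWithinEval f n (Metric.ball a ε) a x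
      = (x - a) ^ n • (n.factorial : ℝ)⁻¹ • iteratedDeriv n f a := by
    simp only [taylor_within_apply, iteratedDerivWithin_of_isOpen Metric.isOpen_ball ha]
    rw [Finset.sum_range_succ, Finset.sum_eq_zero, zero_add, mul_comm, mul_smul]
    intro j hj
    rw [hzero j (Finset.mem_range.mp hj), smul_zero]
  have remainder := taylor_tendsto (convex_ball a ε) ha
    fun x hx => (hball x hx).contDiffWithinAt
  rw [Metric.isOpen_ball.nhdsWithin_eq ha] at remainder
  have hlim := (remainder.mono_left (nhdsWithin_le_nhds (s := {a}ᶜ))).add_const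
    ((n.factorial : ℝ)⁻¹ • iteratedDeriv n f a)
  rw [zero_add] at hlim
  refine hlim.congr' ?_
  filter_upwards [self_mem_nhdsWithin] with x hx
  have hpow : (x - a) ^ n ≠ 0 := pow_ne_zero n (sub_ne_zero.mpr hx)
  rw [taylor_eq, smul_sub, inv_smul_smul₀ hpow, sub_add_cancel]

theorem eventually_hasDerivAt_integral {E : Type*} [NormedAddCommGroup E] [NormedSpace ℝ E]
    [CompleteSpace E] {f : ℝ → E} {a : ℝ} (hf : ContDiffAt ℝ 0 f a) :
    ∀ᶠ x in 𝓝 a, HasDerivAt (fun u => ∫ s in a..u, f s) (f x) x := by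
  obtain ⟨U, hU, hcontU⟩ := contDiffAt_zero.mp hf
  obtain ⟨ε, hε, hballU⟩ := Metric.mem_nhds_iff.mp hU
  have hcont : ContinuousOn f (Metric.ball a ε) := hcontU.mono hballU
  filter_upwards [Metric.ball_mem_nhds a hε] with x hx
  have hsub : uIcc a x ⊆ Metric.ball a ε :=
    (convex_ball a ε).ordConnected.uIcc_subset (Metric.mem_ball_self hε) hx
  exact intervalIntegral.integral_hasDerivAt_right (hcont.mono hsub).intervalIntegrable
    (hcont.stronglyMeasurableAtFilter Metric.isOpen_ball x hx)
    (hcont.continuousAt (Metric.isOpen_ball.mem_nhds hx))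

/-- `f` vanishes to exact order `n` at `a`, so that `f x = c (x - a) ^ n + o((x - a) ^ n)` with
`c ≠ 0`. The derivatives are only meaningful under the smoothness condition, which is therefore
part of the notion. Order `0` means `f a ≠ 0`. -/
structure HasZeroOfOrder {E : Type*} [NormedAddCommGroup E] [NormedSpace ℝ E]
    (f : ℝ → E) (n : ℕ) (a : ℝ) : Prop where
  contDiffAt : ContDiffAt ℝ n f a
  iteratedDeriv_eq_zero : ∀ j < n, iteratedDeriv j f a = 0
  iteratedDeriv_ne_zero : iteratedDeriv n f a ≠ 0

namespace HasZeroOfOrder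

section NormedSpace

variable {E : Type*} [NormedAddCommGroup E] [NormedSpace ℝ E] {f g : ℝ → E} {n : ℕ} {a : ℝ}

theorem congr (hf : HasZeroOfOrder f n a) (hfg : f =ᶠ[𝓝 a] g) : HasZeroOfOrder g n a where
  contDiffAt := hf.contDiffAt.congr_of_eventuallyEq hfg.symm
  iteratedDeriv_eq_zero j hj := by
    rw [← hfg.iteratedDeriv_eq, hf.iteratedDeriv_eq_zero j hj]
  iteratedDeriv_ne_zero := by
    rw [← hfg.iteratedDeriv_eq]
    exact hf.iteratedDeriv_ne_zero

theorem tendsto_inv_pow_smul (hf : HasZeroOfOrder f n a) :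
    Tendsto (fun x => ((x - a) ^ n)⁻¹ • f x) (𝓝[≠] a)
      (𝓝 ((n.factorial : ℝ)⁻¹ • iteratedDeriv n f a)) :=
  tendsto_inv_pow_smul_of_iteratedDeriv_eq_zero hf.contDiffAt hf.iteratedDeriv_eq_zero

theorem eventually_ne_zero (hf : HasZeroOfOrder f n a) : ∀ᶠ x in 𝓝[≠] a, f x ≠ 0 := by
  have hlead : (n.factorial : ℝ)⁻¹ • iteratedDeriv n f a ≠ 0 :=
    smul_ne_zero (by positivity) hf.iteratedDeriv_ne_zero
  filter_upwards [hf.tendsto_inv_pow_smul.eventually_ne hlead] with x hx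
  exact right_ne_zero_of_smul hx

theorem succ_iff_deriv :
    HasZeroOfOrder f (n + 1) a ↔
      (∀ᶠ x in 𝓝 a, DifferentiableAt ℝ f x) ∧ f a = 0 ∧ HasZeroOfOrder (deriv f) n a := by
  constructor
  · rintro ⟨hsmooth, hzero, hne⟩
    obtain ⟨hdiff, hderiv⟩ := contDiffAt_nat_succ_iff_deriv.mp (by exact_mod_cast hsmooth)
    rw [iteratedDeriv_succ'] at hne
    refine ⟨hdiff, by simpa using hzero 0 n.succ_pos, hderiv, fun j hj => ?_, hne⟩
    rw [← iteratedDeriv_succ']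
    exact hzero (j + 1) (by lia)
  · rintro ⟨hdiff, ha, hderiv, hzero, hne⟩
    refine ⟨by exact_mod_cast contDiffAt_nat_succ_iff_deriv.mpr ⟨hdiff, hderiv⟩, ?_, ?_⟩
    · rintro (_ | j) hj
      · simpa using ha
      · rw [iteratedDeriv_succ']
        exact hzero j (by lia)
    · rwa [iteratedDeriv_succ']

theorem integral [CompleteSpace E] (hf : HasZeroOfOrder f n a) :
    HasZeroOfOrder (fun x => ∫ s in a..x, f s) (n + 1) a := by
  have hprim := eventually_hasDerivAt_integral (hf.contDiffAt.of_le (by simp))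
  refine succ_iff_deriv.mpr ⟨hprim.mono fun x hx => hx.differentiableAt, by simp, hf.congr ?_⟩
  exact hprim.mono fun x hx => hx.deriv.symm

end NormedSpace

variable {𝕜 : Type*} [RCLike 𝕜] {f : ℝ → 𝕜} {n : ℕ} {a : ℝ}

theorem tendsto_smul_logDeriv (hf : HasZeroOfOrder f n a) (hf₁ : ContDiffAt ℝ 1 f a) :
    Tendsto (fun x => (x - a) • logDeriv f x) (𝓝[≠] a) (𝓝 (n : 𝕜)) := by
  rcases n with _ | n
  · have hfa : f a ≠ 0 := by simpa using hf.iteratedDeriv_ne_zero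
    have hderiv : ContinuousAt (deriv f) a :=
      (contDiffAt_nat_succ_iff_deriv (n := 0).mp (by simpa using hf₁)).2.continuousAt
    have hcont : ContinuousAt (fun x => (x - a) • logDeriv f x) a :=
      (continuousAt_id.sub continuousAt_const).smul (hderiv.div hf₁.continuousAt hfa)
    simpa using hcont.tendsto.mono_left nhdsWithin_le_nhds
  · have hratio := (succ_iff_deriv.mp hf).2.2.tendsto_inv_pow_smul.div hf.tendsto_inv_pow_smul
      (smul_ne_zero (by positivity) hf.iteratedDeriv_ne_zero)
    have hlim : (n.factorial : ℝ)⁻¹ • iteratedDeriv n (deriv f) a /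
        (((n + 1).factorial : ℝ)⁻¹ • iteratedDeriv (n + 1) f a) = ((n + 1 : ℕ) : 𝕜) := by
      have hne := hf.iteratedDeriv_ne_zero
      rw [iteratedDeriv_succ'] at hne ⊢
      have hfac : (n.factorial : 𝕜) ≠ 0 := by exact_mod_cast n.factorial_ne_zero
      have hsucc : ((n : 𝕜) + 1) ≠ 0 := by exact_mod_cast n.succ_ne_zero
      simp only [RCLike.real_smul_eq_coe_mul, Nat.factorial_succ]
      push_cast
      field_simp
    rw [hlim] at hratio
    refine hratio.congr' ?_
    filter_upwards [self_mem_nhdsWithin, hf.eventually_ne_zero] with x hx hfx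
    have hxa : ((x - a : ℝ) : 𝕜) ≠ 0 := RCLike.ofReal_ne_zero.mpr (sub_ne_zero.mpr hx)
    simp only [Pi.div_apply, RCLike.real_smul_eq_coe_mul, logDeriv_apply, RCLike.ofReal_inv,
      RCLike.ofReal_pow]
    field_simp
    ring

theorem tendsto_deriv_div_deriv (hf : HasZeroOfOrder f (n + 1) a)
    (hf' : ContDiffAt ℝ 1 (deriv f) a) :
    Tendsto (deriv (f / deriv f)) (𝓝[≠] a) (𝓝 (1 / ((n : 𝕜) + 1))) := by
  obtain ⟨hdiff, -, hderiv⟩ := succ_iff_deriv.mp hf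
  have hsucc : (n : 𝕜) + 1 ≠ 0 := by exact_mod_cast n.succ_ne_zero
  have hlog : Tendsto (fun x => (x - a) • logDeriv f x) (𝓝[≠] a) (𝓝 ((n : 𝕜) + 1)) := by
    simpa using hf.tendsto_smul_logDeriv (hf.contDiffAt.of_le (by simp))
  have hlim := ((hderiv.tendsto_smul_logDeriv hf').div hlog hsucc).const_sub 1
  rw [show 1 - (n : 𝕜) / (n + 1) = 1 / (n + 1) by field_simp; ring] at hlim
  refine hlim.congr' ?_
  filter_upwards [self_mem_nhdsWithin, hdiff.filter_mono nhdsWithin_le_nhds,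
    (hf'.eventually (by simp)).filter_mono nhdsWithin_le_nhds, hderiv.eventually_ne_zero]
    with x hx hfx hf'x hne
  rw [deriv_div_deriv_eq_one_sub_logDeriv_div hfx (hf'x.differentiableAt (by simp)) hne,
    Pi.div_apply, RCLike.real_smul_eq_coe_mul, RCLike.real_smul_eq_coe_mul,
    mul_div_mul_left _ _ (RCLike.ofReal_ne_zero.mpr (sub_ne_zero.mpr hx))]

end HasZeroOfOrder

theorem deriv_exit_time_profile_tendsto_general {𝕜 : Type*} [RCLike 𝕜] {θ : ℝ → 𝕜} {d : ℕ} {R : ℝ}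
    (hθ : HasZeroOfOrder θ d R) (hθ₁ : ContDiffAt ℝ 1 θ R) :
    Tendsto (deriv fun r => (∫ s in r..R, θ s) / θ r) (𝓝[≠] R) (𝓝 (-1 / ((d : 𝕜) + 1))) := by
  set G : ℝ → 𝕜 := fun r => ∫ s in R..r, θ s
  have hG' : deriv G =ᶠ[𝓝 R] θ :=
    (eventually_hasDerivAt_integral (hθ₁.of_le zero_le_one)).mono fun r hr => hr.deriv
  have hprofile : (fun r => (∫ s in r..R, θ s) / θ r) =ᶠ[𝓝 R] -(G / deriv G) := by
    filter_upwards [hG'] with r hr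
    rw [intervalIntegral.integral_symm, Pi.neg_apply, Pi.div_apply, hr, neg_div]
  have hlim := (hθ.integral.tendsto_deriv_div_deriv (hθ₁.congr_of_eventuallyEq hG')).neg
  rw [← neg_div] at hlim
  refine hlim.congr' ?_
  filter_upwards [hprofile.deriv.filter_mono nhdsWithin_le_nhds] with r hr
  rw [hr, deriv.neg]

/-- **Limit of the second derivative of the mean exit time profile.** Let `θ : ℝ → ℝ` be `C^∞`,
positive on `[0, R)`, vanishing to exact order `d` at `R`. Then the derivative of
`q(r) = (∫_r^R θ) / θ(r)` tends to `-1/(d+1)` as `r → R⁻`. -/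
theorem deriv_exit_time_profile_tendsto
    (R : ℝ) (hR : 0 < R) (d : ℕ) (θ : ℝ → ℝ)
    (hθ : ContDiff ℝ (⊤ : ℕ∞) θ)
    (hpos : ∀ r ∈ Set.Ico (0 : ℝ) R, 0 < θ r)
    (hvanish : ∀ j < d, iteratedDeriv j θ R = 0)
    (hd : iteratedDeriv d θ R ≠ 0)
    (q : ℝ → ℝ)
    (hq : ∀ r : ℝ, q r = (∫ s in r..R, θ s) / θ r) :
    Filter.Tendsto (deriv q) (nhdsWithin R (Set.Iio R)) (nhds (-1 / ((d : ℝ) + 1))) := by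
  have hsmooth (n : ℕ) : ContDiffAt ℝ n θ R := (hθ.of_le (by exact_mod_cast le_top)).contDiffAt
  rw [funext hq]
  exact (deriv_exit_time_profile_tendsto_general ⟨hsmooth d, hvanish, hd⟩
    (by simpa using hsmooth 1)).mono_left (nhdsLT_le_nhdsNE R)
end

section
/- Let E be a finite-dimensional real normed vector space, let k ∈ ℕ, and let φ : ℝ × E → ℝ be C^∞. Suppose there are constants c_0, …, c_k ∈ ℝ such that for every j ≤ k and every y ∈ E, the j-th derivative of r ↦ φ(r,y) at r = 0 equals c_j (i.e. iteratedDeriv j (fun r => φ (r, y)) 0 = c j). Then there exist a C^∞ function ψ : ℝ → ℝ and a C^∞ function f : ℝ × E → ℝ such that φ(r,y) = ψ(r) + r^{k+1} · f(r,y) for all (r,y) ∈ ℝ × E. -/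
/-!
Fix `y` and write Taylor's formula for `r ↦ φ (r, y)` at `0` with integral remainder. By hypothesis
the Taylor polynomial does not depend on `y`, so it serves as `ψ`. Substituting `s = t * r` in the
remainder takes out the factor `r ^ (k + 1)` and leaves an integral over the fixed interval
`[0, 1]`, which is smooth in `(r, y)` by repeated differentiation under the integral sign.
-/

open Filter Function MeasureTheory Topology
open scoped ContDiff

theorem exists_eventually_forall_norm_le_of_isCompact {X T G : Type*} [TopologicalSpace X]
    [TopologicalSpace T] [SeminormedAddCommGroup G] {f : X → T → G} (hf : Continuous (uncurry f))
    {K : Set T} (hK : IsCompact K) (x₀ : X) :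
    ∃ C, ∀ᶠ x in 𝓝 x₀, ∀ t ∈ K, ‖f x t‖ ≤ C := by
  obtain ⟨C, hC⟩ := hK.exists_bound_of_continuousOn (hf.uncurry_left x₀).continuousOn
  refine ⟨C + 1, hK.eventually_forall_of_forall_eventually fun t ht => ?_⟩
  have hlt : ‖uncurry f (x₀, t)‖ < C + 1 := (hC t ht).trans_lt (lt_add_one C)
  exact (hf.norm.continuousAt.eventually_lt_const hlt).mono fun _ => le_of_lt

theorem intervalIntegral_continuousLinearEquiv_comp_comm {𝕜 E F : Type*} [RCLike 𝕜]
    [NormedAddCommGroup E] [NormedSpace ℝ E] [NormedSpace 𝕜 E]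
    [NormedAddCommGroup F] [NormedSpace ℝ F] [NormedSpace 𝕜 F] {μ : Measure ℝ}
    (L : E ≃L[𝕜] F) (f : ℝ → E) (a b : ℝ) :
    ∫ t in a..b, L (f t) ∂μ = L (∫ t in a..b, f t ∂μ) := by
  simp only [intervalIntegral, L.integral_comp_comm, map_sub]

theorem hasFTaylorSeriesUpTo_prodMk_left {𝕜 E E' F : Type*} [NontriviallyNormedField 𝕜]
    [NormedAddCommGroup E] [NormedSpace 𝕜 E] [NormedAddCommGroup E'] [NormedSpace 𝕜 E']
    [NormedAddCommGroup F] [NormedSpace 𝕜 F] {n : ℕ∞ω} {f : E × E' → F}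
    {p : E × E' → FormalMultilinearSeries 𝕜 (E × E') F} (hp : HasFTaylorSeriesUpTo n f p) (y : E') :
    HasFTaylorSeriesUpTo n (fun x => f (x, y))
      (fun x m => (p (x, y) m).compContinuousLinearMap fun _ => .inl 𝕜 E E') := by
  have h := (hp.hasFTaylorSeriesUpToOn Set.univ).comp_continuousAffineMap
    ((ContinuousAffineMap.id 𝕜 E).prod (.const 𝕜 E y))
  exact hasFTaylorSeriesUpToOn_univ_iff.1 h

section ParametricIntegral

variable {H G : Type*} [NormedAddCommGroup H] [NormedSpace ℝ H]
  [NormedAddCommGroup G] [NormedSpace ℝ G] {μ : Measure ℝ} [IsLocallyFiniteMeasure μ]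

theorem hasFDerivAt_intervalIntegral_of_continuous {f : H → ℝ → G} {f' : H → ℝ → H →L[ℝ] G}
    (hf : ∀ x, Continuous (f x)) (hf' : Continuous (uncurry f'))
    (hderiv : ∀ x t, HasFDerivAt (f · t) (f' x t) x) (a b : ℝ) (x : H) :
    HasFDerivAt (fun z => ∫ t in a..b, f z t ∂μ) (∫ t in a..b, f' x t ∂μ) x := by
  obtain ⟨C, hC⟩ :=
    exists_eventually_forall_norm_le_of_isCompact hf' (isCompact_uIcc (a := a) (b := b)) x
  exact intervalIntegral.hasFDerivAt_integral_of_dominated_of_fderiv_le hC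
    (.of_forall fun z => (hf z).aestronglyMeasurable) ((hf x).intervalIntegrable a b)
    (hf'.uncurry_left x).aestronglyMeasurable
    (.of_forall fun t ht z hz => hz t (Set.uIoc_subset_uIcc ht)) intervalIntegrable_const
    (.of_forall fun t _ z _ => hderiv z t)

theorem hasFTaylorSeriesUpTo_intervalIntegral [NullSingletonClass μ] {n : ℕ∞ω} {f : H → ℝ → G}
    {p : H → ℝ → FormalMultilinearSeries ℝ H G}
    (hp : ∀ t, HasFTaylorSeriesUpTo n (f · t) (p · t))
    (hcont : ∀ m : ℕ, m ≤ n → Continuous (uncurry fun x t => p x t m)) (a b : ℝ) :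
    HasFTaylorSeriesUpTo n (fun x => ∫ t in a..b, f x t ∂μ)
      (fun x m => ∫ t in a..b, p x t m ∂μ) where
  zero_eq x := by
    let evalZero : (H [×0]→L[ℝ] G) ≃L[ℝ] G := continuousMultilinearCurryFin0 ℝ H G
    simp only [← (hp _).zero_eq]
    exact (intervalIntegral_continuousLinearEquiv_comp_comm evalZero (p x · 0) a b).symm
  fderiv m hm x := by
    let curry : (H [×m + 1]→L[ℝ] G) ≃L[ℝ] (H →L[ℝ] H [×m]→L[ℝ] G) :=
      (continuousMultilinearCurryLeftEquiv ℝ (fun _ : Fin (m + 1) => H) G).toContinuousLinearEquiv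
    have hcurry : Continuous (uncurry fun x t => curry (p x t (m + 1))) :=
      curry.continuous.comp (hcont (m + 1) (ENat.add_one_natCast_le_withTop_of_lt hm))
    have hderiv := hasFDerivAt_intervalIntegral_of_continuous (μ := μ)
      (f' := fun x t => curry (p x t (m + 1))) (fun x => (hcont m hm.le).uncurry_left x) hcurry
      (fun x t => (hp t).fderiv m hm x) a b x
    have hcomm := intervalIntegral_continuousLinearEquiv_comp_comm (𝕜 := ℝ) (μ := μ)
      (F := H →L[ℝ] H [×m]→L[ℝ] G) curry (p x · (m + 1)) a b
    exact hderiv.congr_fderiv hcomm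
  cont m hm :=
    intervalIntegral.continuous_parametric_intervalIntegral_of_continuous' (hcont m hm) a b

theorem contDiff_intervalIntegral [NullSingletonClass μ] {n : ℕ∞} {f : H → ℝ → G}
    (hf : ContDiff ℝ n (uncurry f)) (a b : ℝ) :
    ContDiff ℝ n fun x => ∫ t in a..b, f x t ∂μ := by
  -- Induction on `n` would change the codomain to `H →L[ℝ] G`, and with it the universe level;
  -- integrating the whole Taylor series avoids this.
  have hseries := contDiff_iff_ftaylorSeries.1 hf
  exact (hasFTaylorSeriesUpTo_intervalIntegral
    (fun t => hasFTaylorSeriesUpTo_prodMk_left hseries t)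
    (fun m hm => (ContinuousMultilinearMap.compContinuousLinearMapL _).continuous.comp
      (hseries.cont m hm)) a b).contDiff

end ParametricIntegral

theorem iteratedDeriv_comp_add_smul {𝕜 E F : Type*} [NontriviallyNormedField 𝕜]
    [NormedAddCommGroup E] [NormedSpace 𝕜 E] [NormedAddCommGroup F] [NormedSpace 𝕜 F]
    {f : E → F} {n : ℕ} (hf : ContDiff 𝕜 n f) (x v : E) (t : 𝕜) :
    iteratedDeriv n (fun s : 𝕜 => f (x + s • v)) t =
      iteratedFDeriv 𝕜 n f (x + t • v) (fun _ => v) := by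
  induction n generalizing t with
  | zero => simp
  | succ n ih =>
    rw [iteratedDeriv_succ, funext (ih (hf.of_le (by norm_cast; omega)))]
    exact ContDiffAt.deriv_fderiv_add_smul (by exact_mod_cast hf.contDiffAt)

section LineTaylor

variable {E F : Type*} [NormedAddCommGroup E] [NormedSpace ℝ E]
  [NormedAddCommGroup F] [NormedSpace ℝ F]

/-- The integral remainder of order `k` in Taylor's formula for `r ↦ f (x + r • v)` at `0`,
divided by `r ^ (k + 1)`. Integrating over `[0, 1]` rather than `[0, r]` makes it
meaningful at `r = 0`. -/
noncomputable def lineTaylorRemainder (f : E → F) (v : E) (k : ℕ) (x : E) (r : ℝ) : F :=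
  (k.factorial : ℝ)⁻¹ • ∫ t in (0 : ℝ)..1,
    (1 - t) ^ k • iteratedFDeriv ℝ (k + 1) f (x + (t * r) • v) fun _ => v

theorem contDiff_uncurry_lineTaylorRemainder {n : ℕ∞} {k : ℕ} {f : E → F}
    (hf : ContDiff ℝ (n + (k + 1 : ℕ)) f) (v : E) :
    ContDiff ℝ n (uncurry (lineTaylorRemainder f v k)) := by
  have hD : ContDiff ℝ n (iteratedFDeriv ℝ (k + 1) f) := hf.iteratedFDeriv_right'
  have hDv : ContDiff ℝ n fun x => iteratedFDeriv ℝ (k + 1) f x fun _ => v :=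
    (ContinuousMultilinearMap.apply ℝ (fun _ : Fin (k + 1) => E) F fun _ => v).contDiff.comp hD
  refine (contDiff_intervalIntegral (f := fun (p : E × ℝ) t =>
    (1 - t) ^ k • iteratedFDeriv ℝ (k + 1) f (p.1 + (t * p.2) • v) fun _ => v) ?_ 0 1).const_smul _
  simp only [Function.uncurry_def]
  fun_prop

theorem map_add_smul_eq_sum_add_pow_smul_lineTaylorRemainder [CompleteSpace F] {k : ℕ} {f : E → F}
    (hf : ContDiff ℝ (k + 1 : ℕ) f) (x v : E) (r : ℝ) :
    f (x + r • v) =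
      ∑ j ∈ Finset.range (k + 1),
        (j.factorial : ℝ)⁻¹ • r ^ j • iteratedDeriv j (fun s : ℝ => f (x + s • v)) 0 +
        r ^ (k + 1) • lineTaylorRemainder f v k x r := by
  have hscale (j : ℕ) (z : E) : iteratedFDeriv ℝ j f z (fun _ => r • v) =
      r ^ j • iteratedFDeriv ℝ j f z fun _ => v := by
    simpa using (iteratedFDeriv ℝ j f z).map_smul_univ (fun _ => r) fun _ => v
  have hcoeff (j : ℕ) (hj : j ∈ Finset.range (k + 1)) :
      iteratedDeriv j (fun s : ℝ => f (x + s • v)) 0 = iteratedFDeriv ℝ j f x fun _ => v := by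
    simpa using iteratedDeriv_comp_add_smul
      (hf.of_le (by exact_mod_cast (Finset.mem_range.1 hj).le)) x v (0 : ℝ)
  rw [map_add_eq_sum_add_integral_iteratedFDeriv (f := f) (n := k)
    fun t _ => by exact_mod_cast hf.contDiffAt]
  congr 1
  · exact Finset.sum_congr rfl fun j hj => by rw [hscale, hcoeff j hj]
  · simp only [lineTaylorRemainder, mul_smul, hscale, smul_comm _ (r ^ (k + 1)),
      intervalIntegral.integral_smul]

end LineTaylor

theorem level_k_splitting_general {E F : Type*} [NormedAddCommGroup E] [NormedSpace ℝ E]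
    [NormedAddCommGroup F] [NormedSpace ℝ F] [CompleteSpace F] {n : ℕ∞} {k : ℕ} {φ : ℝ × E → F}
    (hφ : ContDiff ℝ (n + (k + 1 : ℕ)) φ) {c : ℕ → F}
    (hc : ∀ j ≤ k, ∀ y, iteratedDeriv j (fun r => φ (r, y)) 0 = c j) :
    ∃ f : ℝ × E → F, ContDiff ℝ n f ∧ ∀ r y,
      φ (r, y) = ∑ j ∈ Finset.range (k + 1), (j.factorial : ℝ)⁻¹ • r ^ j • c j +
        r ^ (k + 1) • f (r, y) := by
  have hbase : ContDiff ℝ n fun p : ℝ × E => ((0 : ℝ), p.2) := by fun_prop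
  have hf : ContDiff ℝ n fun p : ℝ × E => lineTaylorRemainder φ (1, 0) k (0, p.2) p.1 :=
    (contDiff_uncurry_lineTaylorRemainder hφ (1, 0)).comp₂ hbase contDiff_fst
  refine ⟨_, hf, fun r y => ?_⟩
  have hline (s : ℝ) : ((0, y) : ℝ × E) + s • (1, 0) = (s, y) := by simp
  have htaylor := map_add_smul_eq_sum_add_pow_smul_lineTaylorRemainder
    (hφ.of_le le_add_self) (0, y) (1, 0) r
  simp only [hline] at htaylor
  rw [htaylor]
  congr 1
  exact Finset.sum_congr rfl fun j hj => by rw [hc j (Finset.mem_range_succ_iff.1 hj) y]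

/-- **Taylor splitting of functions of level at least `k`.** If `φ : ℝ × E → ℝ` is `C^∞` and,
for each `j ≤ k`, the `j`-th derivative of `r ↦ φ(r, y)` at `r = 0` is a constant `c j`
independent of `y`, then `φ(r, y) = ψ(r) + r^(k+1) · f(r, y)` for some `C^∞` functions
`ψ : ℝ → ℝ` and `f : ℝ × E → ℝ`. -/
theorem level_k_splitting
    {E : Type*} [NormedAddCommGroup E] [NormedSpace ℝ E] [FiniteDimensional ℝ E]
    (k : ℕ) (φ : ℝ × E → ℝ) (hφ : ContDiff ℝ (⊤ : ℕ∞) φ)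
    (c : ℕ → ℝ)
    (hc : ∀ j ≤ k, ∀ y : E, iteratedDeriv j (fun r => φ (r, y)) 0 = c j) :
    ∃ ψ : ℝ → ℝ, ∃ f : ℝ × E → ℝ,
      ContDiff ℝ (⊤ : ℕ∞) ψ ∧ ContDiff ℝ (⊤ : ℕ∞) f ∧
      ∀ r : ℝ, ∀ y : E, φ (r, y) = ψ r + r ^ (k + 1) * f (r, y) := by
  obtain ⟨f, hf, hsplit⟩ :=
    level_k_splitting_general (n := ⊤) (hφ.of_le (by exact_mod_cast le_top)) hc
  exact ⟨_, f, by fun_prop, hf, hsplit⟩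
end

section
/- Let X be a topological space, let E be a finite-dimensional real normed vector space, and let B : X → (E →L[ℝ] E →L[ℝ] ℝ) be a continuous family of continuous bilinear forms on E. For x ∈ X define the index ind(x) ∈ ℕ as the supremum of finrank ℝ W over all subspaces W ⊆ E on which B x is negative definite, i.e. such that (B x) v v < 0 for every nonzero v ∈ W. Then the index is lower semicontinuous: for every x₀ ∈ X there is a neighborhood U of x₀ such that ind(x) ≥ ind(x₀) for all x ∈ U. -/
/-- The index of the bilinear form `B x`: the supremum of the dimensions of the subspaces of `E`
on which `B x` is negative definite. -/
noncomputable def bilinIndex {X : Type*} {E : Type*}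
    [NormedAddCommGroup E] [NormedSpace ℝ E]
    (B : X → E →L[ℝ] E →L[ℝ] ℝ) (x : X) : ℕ :=
  sSup {k : ℕ | ∃ W : Submodule ℝ E,
    (∀ v ∈ W, v ≠ 0 → B x v v < 0) ∧ Module.finrank ℝ W = k}

/-!
On a finite-dimensional subspace `W` the unit sphere is compact, so a form that is negative on it
stays negative on it under small perturbations, and by homogeneity it stays negative definite
on `W`. Hence a subspace realising the index at `x₀` competes for the index at every nearby point.
-/

open Filter Metric Module Topology

section

variable {X : Type*} {E : Type*} [NormedAddCommGroup E] [NormedSpace ℝ E]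
  {b : E →L[ℝ] E →L[ℝ] ℝ} {W : Submodule ℝ E} {B : X → E →L[ℝ] E →L[ℝ] ℝ} {x₀ : X}

/-- The bilinear form `b`, not assumed symmetric, is negative definite on the subspace `W`. -/
def NegDefOn (b : E →L[ℝ] E →L[ℝ] ℝ) (W : Submodule ℝ E) : Prop :=
  ∀ v ∈ W, v ≠ 0 → b v v < 0

theorem negDefOn_bot (b : E →L[ℝ] E →L[ℝ] ℝ) : NegDefOn b ⊥ :=
  fun _ hv hv0 => absurd ((Submodule.mem_bot ℝ).1 hv) hv0

theorem negDefOn_iff_forall_mem_sphere :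
    NegDefOn b W ↔ ∀ w ∈ sphere (0 : W) 1, b w w < 0 := by
  refine ⟨fun h w hw => h w w.2 ?_, fun h v hv hv0 => ?_⟩
  · exact Subtype.coe_ne_coe.2 (ne_zero_of_mem_unit_sphere ⟨w, hw⟩)
  · have hc : 0 < ‖v‖⁻¹ := inv_pos.2 (norm_pos_iff.2 hv0)
    have hunit : ‖v‖⁻¹ • (⟨v, hv⟩ : W) ∈ sphere (0 : W) 1 :=
      mem_sphere_zero_iff_norm.2 (norm_smul_inv_norm (𝕜 := ℝ) (x := (⟨v, hv⟩ : W)) (by simpa))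
    have hneg : ‖v‖⁻¹ • ‖v‖⁻¹ • b v v < 0 := by simpa using h _ hunit
    rwa [smul_neg_iff_of_pos_left hc, smul_neg_iff_of_pos_left hc] at hneg

theorem NegDefOn.eventually [TopologicalSpace X] [FiniteDimensional ℝ W]
    (hW : NegDefOn (B x₀) W) (hB : ContinuousAt B x₀) :
    ∀ᶠ x in 𝓝 x₀, NegDefOn (B x) W := by
  have : ProperSpace W := FiniteDimensional.proper_real W
  simp only [negDefOn_iff_forall_mem_sphere] at hW ⊢
  refine (isCompact_sphere (0 : W) 1).eventually_forall_of_forall_eventually fun w hw => ?_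
  have hcont : ContinuousAt (fun p : X × W => B p.1 p.2 p.2) (x₀, w) :=
    (hB.fst'.clm_apply (by fun_prop)).clm_apply (by fun_prop)
  exact hcont.eventually_lt_const (hW w hw)

/-- The dimensions of the subspaces on which `b` is negative definite; `bilinIndex` is the supremum
of this set. An infinite-dimensional subspace contributes `0`, its `finrank`. -/
def negDefFinranks (b : E →L[ℝ] E →L[ℝ] ℝ) : Set ℕ :=
  {k | ∃ W : Submodule ℝ E, NegDefOn b W ∧ finrank ℝ W = k}

theorem zero_mem_negDefFinranks (b : E →L[ℝ] E →L[ℝ] ℝ) : 0 ∈ negDefFinranks b :=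
  ⟨⊥, negDefOn_bot b, finrank_bot ℝ E⟩

theorem bddAbove_negDefFinranks [FiniteDimensional ℝ E] (b : E →L[ℝ] E →L[ℝ] ℝ) :
    BddAbove (negDefFinranks b) := by
  refine ⟨finrank ℝ E, ?_⟩
  rintro _ ⟨W, -, rfl⟩
  exact W.finrank_le

theorem eventually_mem_negDefFinranks [TopologicalSpace X] {k : ℕ} (hB : ContinuousAt B x₀)
    (hk : k ∈ negDefFinranks (B x₀)) : ∀ᶠ x in 𝓝 x₀, k ∈ negDefFinranks (B x) := by
  obtain rfl | hpos := k.eq_zero_or_pos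
  · exact .of_forall fun x => zero_mem_negDefFinranks (B x)
  · obtain ⟨W, hW, rfl⟩ := hk
    have : FiniteDimensional ℝ W := .of_finrank_pos hpos
    exact (hW.eventually hB).mono fun x hx => ⟨W, hx, rfl⟩

theorem bilinIndex_mem_negDefFinranks {x : X}
    (hfin : BddAbove (negDefFinranks (B x))) : bilinIndex B x ∈ negDefFinranks (B x) :=
  Nat.sSup_mem ⟨0, zero_mem_negDefFinranks (B x)⟩ hfin

end

theorem bilinIndex_lower_semicontinuous_general
    {X : Type*} [TopologicalSpace X] {E : Type*} [NormedAddCommGroup E] [NormedSpace ℝ E]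
    {B : X → E →L[ℝ] E →L[ℝ] ℝ} {x₀ : X} (hB : ContinuousAt B x₀)
    (hfin : ∀ᶠ x in 𝓝 x₀, BddAbove (negDefFinranks (B x))) :
    ∀ᶠ x in 𝓝 x₀, bilinIndex B x₀ ≤ bilinIndex B x := by
  have hmem := bilinIndex_mem_negDefFinranks hfin.self_of_nhds
  filter_upwards [hfin, eventually_mem_negDefFinranks hB hmem] with x hbdd hx
  exact le_csSup hbdd hx

/-- **Lower semicontinuity of the index of a continuous family of bilinear forms.** If
`B : X → (E →L[ℝ] E →L[ℝ] ℝ)` is continuous and `E` is finite-dimensional, then each `x₀ ∈ X`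
has a neighborhood `U` such that `ind (B x) ≥ ind (B x₀)` for all `x ∈ U`. -/
theorem bilinIndex_lower_semicontinuous
    {X : Type*} [TopologicalSpace X]
    {E : Type*} [NormedAddCommGroup E] [NormedSpace ℝ E] [FiniteDimensional ℝ E]
    (B : X → E →L[ℝ] E →L[ℝ] ℝ) (hB : Continuous B) (x₀ : X) :
    ∃ U ∈ nhds x₀, ∀ x ∈ U, bilinIndex B x₀ ≤ bilinIndex B x := by
  exact (bilinIndex_lower_semicontinuous_general hB.continuousAt
    (.of_forall fun x => bddAbove_negDefFinranks (B x))).exists_mem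
end
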